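/- arXiv:1910.09829 — 4 statements merged into one kernel-verified Lean document; each statement's English description precedes it below -/
import Mathlib

section
/- Let TS be a deterministic LSTS and r a reduction function satisfying D1, D2w, V, I, L and C4 at every state, and suppose the reduced LSTS TS_r has finitely many states. Then TS_r is stutter-trace equivalent to TS. (Hence CTL_{-X} model checking of deterministic systems with stubborn sets and condition C4 does not suffer from the inconsistent labelling problem.) -/
open scoped Classical

/-- The subsequence of an `Option`-valued sequence consisting of the values at the
indices satisfying `P`, in increasing order (`none` past the end when only finitely
many indices satisfy `P`). -/
noncomputable def subseq {α : Type*} (g : ℕ → Option α) (P : ℕ → Prop) : ℕ → Option α :=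
  fun k => if {i | P i}.Infinite ∨ k < {i | P i}.ncard then g (Nat.nth P k) else none

/-- The no-stutter trace of a sequence of labels (`none` marking positions past the end
of a finite sequence): the subsequence of those values at indices `i` such that `i = 0`
or the value differs from the one at `i - 1`. -/
noncomputable def nsTrace {α : Type*} (g : ℕ → Option α) : ℕ → Option α :=
  subseq g fun i => (g i).isSome ∧ (i = 0 ∨ g i ≠ g (i - 1))

/-- A (finite or infinite) path of a transition relation `Tr`.  `len` is the number of
transitions (`⊤` for an infinite path); the values of `states` and `acts` beyond the
length are irrelevant junk. -/
structure TPath {S : Type*} {A : Type*} (Tr : S → A → S → Prop) where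
  states : ℕ → S
  acts : ℕ → A
  len : ℕ∞
  valid : ∀ i : ℕ, (i : ℕ∞) < len → Tr (states i) (acts i) (states (i + 1))

/-- The sequence of state labels along a path (`none` beyond the end). -/
noncomputable def TPath.labelSeq {S A l : Type*}
    {Tr : S → A → S → Prop} (p : TPath Tr) (L : S → Set l) : ℕ → Option (Set l) :=
  fun i => if (i : ℕ∞) ≤ p.len then some (L (p.states i)) else none

/-- The sequence of actions along a path (`none` beyond the end). -/
noncomputable def TPath.actSeq {S A : Type*}
    {Tr : S → A → S → Prop} (p : TPath Tr) : ℕ → Option A :=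
  fun i => if (i : ℕ∞) < p.len then some (p.acts i) else none

/-- Stutter equivalence of two paths with respect to labellings `L₁`, `L₂`:
both are finite or both are infinite, and they have the same no-stutter trace. -/
def StutterEquiv {S₁ A₁ S₂ A₂ l : Type*}
    {Tr₁ : S₁ → A₁ → S₁ → Prop} {Tr₂ : S₂ → A₂ → S₂ → Prop}
    (L₁ : S₁ → Set l) (L₂ : S₂ → Set l) (p : TPath Tr₁) (q : TPath Tr₂) : Prop :=
  (p.len = ⊤ ↔ q.len = ⊤) ∧ nsTrace (p.labelSeq L₁) = nsTrace (q.labelSeq L₂)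

/-- Weak equivalence of two paths with respect to a set `I` of invisible actions:
both are finite or both are infinite, and the projections of their action sequences
onto the visible actions (those not in `I`) are equal. -/
def WeakEquiv {S₁ S₂ A : Type*}
    {Tr₁ : S₁ → A → S₁ → Prop} {Tr₂ : S₂ → A → S₂ → Prop}
    (I : Set A) (p : TPath Tr₁) (q : TPath Tr₂) : Prop :=
  (p.len = ⊤ ↔ q.len = ⊤) ∧
    subseq p.actSeq (fun i => (i : ℕ∞) < p.len ∧ p.acts i ∉ I) =
      subseq q.actSeq (fun i => (i : ℕ∞) < q.len ∧ q.acts i ∉ I)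

/-- A finite run of length `n` along `Tr`: `σ 0 -α 0→ σ 1 -α 1→ ⋯ -α (n-1)→ σ n`. -/
def FinRun {S A : Type*} (Tr : S → A → S → Prop) (n : ℕ) (σ : ℕ → S) (α : ℕ → A) : Prop :=
  ∀ i < n, Tr (σ i) (α i) (σ (i + 1))

/-- `a` is a key action in `s` w.r.t. the reduction function `r`: for all
`a₁, …, aₙ ∉ r s` and paths `s -a₁…aₙ→ s'`, the action `a` is enabled in `s'`. -/
def KeyAction {S A : Type*} (Tr : S → A → S → Prop) (r : S → Set A) (s : S) (a : A) : Prop :=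
  ∀ (n : ℕ) (σ : ℕ → S) (α : ℕ → A), σ 0 = s → FinRun Tr n σ α →
    (∀ i < n, α i ∉ r s) → ∃ t, Tr (σ n) a t

/-- Condition D0: if some action is enabled in `s`, then `r s` contains an enabled action. -/
def CondD0 {S A : Type*} (Tr : S → A → S → Prop) (r : S → Set A) (s : S) : Prop :=
  (∃ a t, Tr s a t) → ∃ a ∈ r s, ∃ t, Tr s a t

/-- Condition D1. -/
def CondD1 {S A : Type*} (Tr : S → A → S → Prop) (r : S → Set A) (s : S) : Prop :=
  ∀ a ∈ r s, ∀ (n : ℕ) (σ : ℕ → S) (α : ℕ → A) (sn' : S),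
    σ 0 = s → FinRun Tr n σ α → (∀ i < n, α i ∉ r s) → Tr (σ n) a sn' →
    ∃ σ' : ℕ → S, Tr s a (σ' 0) ∧ FinRun Tr n σ' α ∧ σ' n = sn'

/-- Condition D1' (strengthened D1): additionally, if `a` is invisible then
`sᵢ -a→ s'ᵢ` for every `1 ≤ i < n`. -/
def CondD1' {S A : Type*} (Tr : S → A → S → Prop) (I : Set A) (r : S → Set A) (s : S) : Prop :=
  ∀ a ∈ r s, ∀ (n : ℕ) (σ : ℕ → S) (α : ℕ → A) (sn' : S),
    σ 0 = s → FinRun Tr n σ α → (∀ i < n, α i ∉ r s) → Tr (σ n) a sn' →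
    ∃ σ' : ℕ → S, Tr s a (σ' 0) ∧ FinRun Tr n σ' α ∧ σ' n = sn' ∧
      (a ∈ I → ∀ i, 1 ≤ i → i < n → Tr (σ i) a (σ' i))

/-- Condition D2: every enabled action of `r s` is a key action in `s`. -/
def CondD2 {S A : Type*} (Tr : S → A → S → Prop) (r : S → Set A) (s : S) : Prop :=
  ∀ a ∈ r s, (∃ t, Tr s a t) → KeyAction Tr r s a

/-- Condition D2w: if some action is enabled in `s`, then `r s` contains a key action. -/
def CondD2w {S A : Type*} (Tr : S → A → S → Prop) (r : S → Set A) (s : S) : Prop :=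
  (∃ a t, Tr s a t) → ∃ a ∈ r s, KeyAction Tr r s a

/-- Condition V: if `r s` contains an enabled visible action, it contains all visible
actions. -/
def CondV {S A : Type*} (Tr : S → A → S → Prop) (I : Set A) (r : S → Set A) (s : S) : Prop :=
  (∃ a ∈ r s, a ∉ I ∧ ∃ t, Tr s a t) → ∀ a, a ∉ I → a ∈ r s

/-- Condition I: if an invisible action is enabled in `s`, then `r s` contains an
invisible key action. -/
def CondI {S A : Type*} (Tr : S → A → S → Prop) (I : Set A) (r : S → Set A) (s : S) : Prop :=
  (∃ a ∈ I, ∃ t, Tr s a t) → ∃ a ∈ r s, a ∈ I ∧ KeyAction Tr r s a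

/-- The states of the reduced LSTS: the smallest set of states containing the initial
state `s0` and closed under transitions labelled with actions of the stubborn set. -/
inductive RedReach {S A : Type*} (Tr : S → A → S → Prop) (r : S → Set A) (s0 : S) : S → Prop
  | refl : RedReach Tr r s0 s0
  | step {s a t} : RedReach Tr r s0 s → a ∈ r s → Tr s a t → RedReach Tr r s0 t

/-- The transition relation of the reduced LSTS. -/
def RedTr {S A : Type*} (Tr : S → A → S → Prop) (r : S → Set A) (s0 : S) :
    S → A → S → Prop :=
  fun s a t => RedReach Tr r s0 s ∧ a ∈ r s ∧ Tr s a t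

/-- Condition L: for every visible action `a`, every cycle in the reduced LSTS
contains a state `s` with `a ∈ r s`. -/
def CondL {S A : Type*} (Tr : S → A → S → Prop) (I : Set A) (r : S → Set A) (s0 : S) : Prop :=
  ∀ a ∉ I, ∀ (n : ℕ) (σ : ℕ → S) (α : ℕ → A), 0 < n →
    FinRun (RedTr Tr r s0) n σ α → σ n = σ 0 → ∃ i < n, a ∈ r (σ i)

/-- Condition C4: either `r s` consists of all actions, or `r s` contains precisely one
enabled action. -/
def CondC4 {S A : Type*} (Tr : S → A → S → Prop) (r : S → Set A) (s : S) : Prop :=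
  r s = Set.univ ∨ ∃! a, a ∈ r s ∧ ∃ t, Tr s a t

/-- `I` is a set of invisible actions w.r.t. the labelling `L`. -/
def InvisibleSet {S A l : Type*} (Tr : S → A → S → Prop) (L : S → Set l) (I : Set A) : Prop :=
  ∀ a ∈ I, ∀ s t, Tr s a t → L s = L t

/-- Reachability along `Tr`. -/
inductive Reach {S A : Type*} (Tr : S → A → S → Prop) (s0 : S) : S → Prop
  | refl : Reach Tr s0 s0
  | step {s a t} : Reach Tr s0 s → Tr s a t → Reach Tr s0 t

/-- Stutter-trace equivalence of two systems: for every initial path of the one there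
is a stutter equivalent initial path of the other, and vice versa. -/
def StutterTraceEquiv {S₁ A₁ S₂ A₂ l : Type*} (Tr₁ : S₁ → A₁ → S₁ → Prop) (i₁ : S₁)
    (L₁ : S₁ → Set l) (Tr₂ : S₂ → A₂ → S₂ → Prop) (i₂ : S₂) (L₂ : S₂ → Set l) : Prop :=
  (∀ p : TPath Tr₁, p.states 0 = i₁ →
      ∃ q : TPath Tr₂, q.states 0 = i₂ ∧ StutterEquiv L₁ L₂ p q) ∧
  (∀ q : TPath Tr₂, q.states 0 = i₂ →
      ∃ p : TPath Tr₁, p.states 0 = i₁ ∧ StutterEquiv L₁ L₂ p q)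

/-- Weak-trace equivalence of two systems with the same set `I` of invisible actions. -/
def WeakTraceEquiv {S₁ S₂ A : Type*} (Tr₁ : S₁ → A → S₁ → Prop) (i₁ : S₁)
    (Tr₂ : S₂ → A → S₂ → Prop) (i₂ : S₂) (I : Set A) : Prop :=
  (∀ p : TPath Tr₁, p.states 0 = i₁ → ∃ q : TPath Tr₂, q.states 0 = i₂ ∧ WeakEquiv I p q) ∧
  (∀ q : TPath Tr₂, q.states 0 = i₂ → ∃ p : TPath Tr₁, p.states 0 = i₁ ∧ WeakEquiv I p q)

/-- An LSTS is labelled consistently iff any two weakly equivalent paths starting in a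
common state are stutter equivalent. -/
def LabelledConsistently {S A l : Type*} (Tr : S → A → S → Prop) (L : S → Set l)
    (I : Set A) : Prop :=
  ∀ p q : TPath Tr, p.states 0 = q.states 0 → WeakEquiv I p q → StutterEquiv L L p q

/-- Label sequence of an explicitly given finite run with `n` transitions. -/
noncomputable def finLabelSeq {S l : Type*} (L : S → Set l) (n : ℕ) (σ : ℕ → S) :
    ℕ → Option (Set l) :=
  fun i => if i ≤ n then some (L (σ i)) else none

/-- Stutter equivalence of two explicitly given finite runs (with `n`, resp. `m`,
transitions); both are finite, so it only requires equality of no-stutter traces. -/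
def FinStutterEquiv {S l : Type*} (L : S → Set l) (n : ℕ) (σ : ℕ → S) (m : ℕ)
    (τ : ℕ → S) : Prop :=
  nsTrace (finLabelSeq L n σ) = nsTrace (finLabelSeq L m τ)

/-- Stutter equivalence of two explicitly given infinite runs; both are infinite, so it
only requires equality of no-stutter traces. -/
def InfStutterEquiv {S l : Type*} (L : S → Set l) (σ τ : ℕ → S) : Prop :=
  nsTrace (fun i => some (L (σ i))) = nsTrace (fun i => some (L (τ i)))

theorem subseq_of_mem {α : Type*} (g : ℕ → Option α) (P : ℕ → Prop) [DecidablePred P] {i : ℕ} (hi : P i) :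
    subseq g P (Nat.count P i) = g i := by
  unfold subseq
  rw [Nat.nth_count hi, if_pos]
  by_cases h : {i | P i}.Infinite
  · exact Or.inl h
  · right
    rw [Set.not_infinite] at h
    have := Nat.count_lt_card h hi
    rwa [Set.ncard_eq_toFinset_card _ h]

theorem subseq_of_not_mem {α : Type*} (g : ℕ → Option α) (P : ℕ → Prop) [DecidablePred P] {k : ℕ}
    (h : ∀ i, P i → Nat.count P i ≠ k) : subseq g P k = none := by
  unfold subseq
  rw [if_neg]
  intro hc
  have hk : ∀ hf : {i | P i}.Finite, k < hf.toFinset.card := by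
    intro hf
    rcases hc with hc | hc
    · exact absurd hf hc
    · rwa [Set.ncard_eq_toFinset_card _ hf] at hc
  exact h (Nat.nth P k) (Nat.nth_mem k hk) (Nat.count_nth hk)

theorem subseq_comp {α : Type*} (g : ℕ → Option α) (P : ℕ → Prop) (e : ℕ → ℕ)
    (he : StrictMono e) (hP : ∀ i, P i → i ∈ Set.range e) :
    subseq (fun i => g (e i)) (fun i => P (e i)) = subseq g P := by
  have himg : {i | P i} = e '' {i | P (e i)} := by
    ext i
    constructor
    · intro h
      obtain ⟨j, rfl⟩ := hP i h
      exact ⟨j, h, rfl⟩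
    · rintro ⟨j, hj, rfl⟩
      exact hj
  funext k
  unfold subseq
  rw [himg, Set.infinite_image_iff he.injective.injOn, Set.ncard_image_of_injective _ he.injective]
  split_ifs with hc
  · change g (e (Nat.nth (fun i => P (e i)) k)) = _
    rw [Nat.nth_comp_of_strictMono he hP]
    intro hf
    have hf' : {i | P i}.Finite := hf
    have : k < {i | P i}.ncard := by
      rcases hc with hc | hc
      · rw [himg] at hf'
        exact absurd hf' ((Set.infinite_image_iff he.injective.injOn).2 hc)
      · rwa [himg, Set.ncard_image_of_injective _ he.injective]
    rwa [Set.ncard_eq_toFinset_card _ hf'] at this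
  · rfl

theorem nsTrace_remove {α : Type*} (g : ℕ → Option α) (n : ℕ) (hn : g n = g (n + 1)) :
    nsTrace (fun i => if i < n then g i else g (i + 1)) = nsTrace g := by
  let e : ℕ → ℕ := fun i => if i ≤ n then i else i + 1
  have he : StrictMono e := by
    intro a b hab
    simp only [e]
    split_ifs <;> omega
  have hg : (fun i => if i < n then g i else g (i + 1)) = fun i => g (e i) := by
    funext i
    simp only [e]
    rcases lt_trichotomy i n with h | h | h
    · rw [if_pos h, if_pos h.le]
    · subst h
      simp [hn]
    · rw [if_neg (by omega), if_neg (by omega)]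
  rw [hg]
  unfold nsTrace
  rw [← subseq_comp g _ e he]
  · congr 1
    funext i
    have hi0 : e i = 0 ↔ i = 0 := by
      simp only [e]
      by_cases hin : i ≤ n
      · rw [if_pos hin]
      · rw [if_neg hin]
        omega
    rw [hi0]
    by_cases h0 : i = 0
    · simp [h0]
    have : g (e (i - 1)) = g (e i - 1) := by
      simp only [e]
      by_cases h1 : i ≤ n
      · rw [if_pos h1, if_pos (by omega)]
      · rw [if_neg h1]
        by_cases h2 : i - 1 ≤ n
        · have : i = n + 1 := by omega
          subst this
          simp [hn]
        · rw [if_neg h2]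
          congr 1
          omega
    simp only [this]
  · rintro i ⟨-, hi⟩
    by_cases h1 : i ≤ n
    · exact ⟨i, by simp [e, h1]⟩
    · refine ⟨i - 1, ?_⟩
      have : i ≠ n + 1 := by
        rintro rfl
        rcases hi with hi | hi
        · omega
        · exact hi (by simp [hn])
      simp only [e]
      rw [if_neg (by omega)]
      omega

theorem nsTrace_tail_eq {α : Type*} (g : ℕ → Option α) (h : g 0 = g 1) :
    nsTrace (fun i => g (i + 1)) = nsTrace g := by
  have := nsTrace_remove g 0 h
  simpa using this

theorem nsTrace_zero {α : Type*} (g : ℕ → Option α) (h : (g 0).isSome) :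
    nsTrace g 0 = g 0 := by
  have := subseq_of_mem g (fun i => (g i).isSome ∧ (i = 0 ∨ g i ≠ g (i - 1))) (i := 0) ⟨h, Or.inl rfl⟩
  simpa [nsTrace] using this

theorem nsTrace_tail_ne {α : Type*} (g : ℕ → Option α) (h0 : (g 0).isSome)
    (h : g 0 ≠ g 1) (k : ℕ) :
    nsTrace g (k + 1) = nsTrace (fun i => g (i + 1)) k := by
  let P : ℕ → Prop := fun i => (g i).isSome ∧ (i = 0 ∨ g i ≠ g (i - 1))
  let P' : ℕ → Prop := fun i => (g (i + 1)).isSome ∧ (i = 0 ∨ g (i + 1) ≠ g (i - 1 + 1))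
  have hPP : ∀ i, P (i + 1) ↔ P' i := by
    intro i
    simp only [P, P']
    rcases i with _ | i
    · simp [h.symm]
    · simp
  have hP0 : P 0 := ⟨h0, Or.inl rfl⟩
  have hfe : (fun i => P (i + 1)) = P' := by
    funext i
    exact propext (hPP i)
  have hcount : ∀ i, Nat.count P (i + 1) = Nat.count P' i + 1 := by
    intro i
    rw [Nat.count_succ', if_pos hP0]
    congr 1
    simp only [hPP]
  change subseq g P (k + 1) = subseq (fun i => g (i + 1)) P' k
  by_cases hk : ∃ i, P' i ∧ Nat.count P' i = k
  · obtain ⟨i, hi, rfl⟩ := hk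
    rw [subseq_of_mem _ P' hi, ← hcount, subseq_of_mem _ P ((hPP i).2 hi)]
  · push Not at hk
    rw [subseq_of_not_mem _ P' hk, subseq_of_not_mem]
    intro i hi hc
    rcases i with _ | i
    · simp at hc
    · rw [hcount] at hc
      exact hk i ((hPP i).1 hi) (by omega)

theorem nsTrace_congr_tail {α : Type*} (g h : ℕ → Option α) (h0 : (g 0).isSome)
    (e0 : g 0 = h 0) (e1 : g 1 = h 1)
    (ht : nsTrace (fun i => g (i + 1)) = nsTrace (fun i => h (i + 1))) :
    nsTrace g = nsTrace h := by
  by_cases hc : g 0 = g 1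
  · rw [← nsTrace_tail_eq g hc, ht, nsTrace_tail_eq h (by rw [← e0, ← e1, hc])]
  · funext k
    rcases k with _ | k
    · rw [nsTrace_zero g h0, nsTrace_zero h (e0 ▸ h0), e0]
    · rw [nsTrace_tail_ne g h0 hc, nsTrace_tail_ne h (e0 ▸ h0) (by rwa [← e0, ← e1]), ht]

theorem nsTrace_const_fin {α : Type*} (c : α) (n : ℕ) :
    nsTrace (fun i => if i ≤ n then some c else none) =
      nsTrace (fun i => if i ≤ 0 then some c else none) := by
  induction n with
  | zero => rfl
  | succ n ih =>
    rw [← ih, ← nsTrace_tail_eq (fun i => if i ≤ n + 1 then some c else none) (by simp)]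
    congr 1
    funext i
    simp

theorem prefix_lemma {S A : Type*} (Tr : S → A → S → Prop) (I : Set A) (r : S → Set A)
    (hdet : ∀ s a t t', Tr s a t → Tr s a t' → t = t')
    (hstub : ∀ s, CondD1 Tr r s ∧ CondD2w Tr r s ∧ CondV Tr I r s ∧ CondI Tr I r s ∧
      CondC4 Tr r s)
    (p : TPath Tr) (N : ℕ∞) (hN0 : 0 < N) (hN : N ≤ p.len)
    (hr : ∀ i : ℕ, (i : ℕ∞) < N → p.acts i ∉ r (p.states 0)) :
    ∃ (a : A) (t : ℕ → S), a ∈ r (p.states 0) ∧ a ∈ I ∧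
      (∀ b ∈ r (p.states 0), (∃ t, Tr (p.states 0) b t) → b = a) ∧
      (∀ m : ℕ, (m : ℕ∞) ≤ N → Tr (p.states m) a (t m)) ∧
      (∀ m : ℕ, (m : ℕ∞) < N → Tr (t m) (p.acts m) (t (m + 1))) := by
  obtain ⟨hD1, hD2, hV, hCI, hC4⟩ := hstub (p.states 0)
  have hn0 := hr 0 (by simpa using hN0)
  have hen : ∃ t, Tr (p.states 0) (p.acts 0) t :=
    ⟨_, p.valid 0 (lt_of_lt_of_le (by simpa using hN0) hN)⟩
  have hkey_en : ∀ a, KeyAction Tr r (p.states 0) a → ∃ t, Tr (p.states 0) a t := by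
    intro a ha
    exact ha 0 p.states p.acts rfl (fun i hi => absurd hi (by omega)) (fun i hi => absurd hi (by omega))
  rcases hC4 with hC4 | ⟨a, ⟨har, hae⟩, hau⟩
  · rw [hC4] at hn0
    exact absurd (Set.mem_univ _) hn0
  have huniq : ∀ b ∈ r (p.states 0), (∃ t, Tr (p.states 0) b t) → b = a :=
    fun b hb hbe => hau b ⟨hb, hbe⟩
  have hkey : KeyAction Tr r (p.states 0) a := by
    obtain ⟨b, hb, hbk⟩ := hD2 ⟨_, hen⟩
    exact huniq b hb (hkey_en b hbk) ▸ hbk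
  have haI : a ∈ I := by
    by_cases h0 : p.acts 0 ∈ I
    · obtain ⟨b, hb, hbI, hbk⟩ := hCI ⟨_, h0, hen⟩
      exact huniq b hb (hkey_en b hbk) ▸ hbI
    · by_contra haI
      exact hn0 (hV ⟨a, har, haI, hae⟩ _ h0)
  have hrun : ∀ m : ℕ, (m : ℕ∞) ≤ N → FinRun Tr m p.states p.acts := by
    intro m hm i hi
    exact p.valid i (lt_of_lt_of_le (lt_of_lt_of_le (by exact_mod_cast hi) hm) hN)
  have hnr : ∀ m : ℕ, (m : ℕ∞) ≤ N → ∀ i < m, p.acts i ∉ r (p.states 0) := by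
    intro m hm i hi
    exact hr i (lt_of_lt_of_le (by exact_mod_cast hi) hm)
  have hex : ∀ m : ℕ, ∃ t, (m : ℕ∞) ≤ N → Tr (p.states m) a t := by
    intro m
    by_cases hm : (m : ℕ∞) ≤ N
    · obtain ⟨t, ht⟩ := hkey m p.states p.acts rfl (hrun m hm) (hnr m hm)
      exact ⟨t, fun _ => ht⟩
    · exact ⟨p.states 0, fun h => absurd h hm⟩
  choose t ht using hex
  refine ⟨a, t, har, haI, huniq, ht, ?_⟩
  intro m hm
  have hm1 : ((m + 1 : ℕ) : ℕ∞) ≤ N := by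
    have := Order.add_one_le_of_lt hm
    exact_mod_cast this
  obtain ⟨σ, hσ0, hσ, hσn⟩ := hD1 a har (m + 1) p.states p.acts _ rfl (hrun _ hm1) (hnr _ hm1) (ht _ hm1)
  obtain ⟨τ, hτ0, hτ, hτn⟩ := hD1 a har m p.states p.acts _ rfl (hrun _ hm.le) (hnr _ hm.le) (ht _ hm.le)
  have heq : ∀ i ≤ m, σ i = τ i := by
    intro i
    induction i with
    | zero => intro _; exact hdet _ _ _ _ hσ0 hτ0
    | succ i ih =>
      intro hi
      have h1 := hσ i (by omega)
      have h2 := hτ i (by omega)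
      rw [ih (by omega)] at h1
      exact hdet _ _ _ _ h1 h2
  have := hσ m (by omega)
  rwa [heq m le_rfl, hτn, hσn] at this

theorem step_lemma {S A l : Type*} (Tr : S → A → S → Prop) (L : S → Set l) (I : Set A)
    (hI : InvisibleSet Tr L I) (r : S → Set A)
    (hdet : ∀ s a t t', Tr s a t → Tr s a t' → t = t')
    (hstub : ∀ s, CondD1 Tr r s ∧ CondD2w Tr r s ∧ CondV Tr I r s ∧ CondI Tr I r s ∧
      CondC4 Tr r s)
    (p : TPath Tr) (hlen : p.len ≠ 0) :
    ∃ (a : A) (p' : TPath Tr), a ∈ r (p.states 0) ∧ Tr (p.states 0) a (p'.states 0) ∧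
      ((p'.len = p.len ∧ p'.acts = p.acts ∧
          (∀ i : ℕ, (i : ℕ∞) < p.len → p.acts i ∉ r (p.states 0)) ∧
          p'.labelSeq L = p.labelSeq L) ∨
        ∃ n : ℕ, (n : ℕ∞) < p.len ∧ p'.len + 1 = p.len ∧
          (∀ i < n, p.acts i ∉ r (p.states 0)) ∧
          (∀ i < n, p'.acts i = p.acts i) ∧
          (p'.labelSeq L = fun i => if i < n then p.labelSeq L i else p.labelSeq L (i + 1)) ∧
          (n ≠ 0 → p.labelSeq L n = p.labelSeq L (n + 1))) := by
  obtain ⟨l', hl'⟩ : ∃ l' : ℕ∞, l' + 1 = p.len := by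
    have : (1 : ℕ∞) ≤ p.len := Order.one_le_iff_ne_zero.2 hlen
    exact ⟨p.len - 1, tsub_add_cancel_of_le this⟩
  have hlt : ∀ i : ℕ, (i : ℕ∞) < l' → ((i + 1 : ℕ) : ℕ∞) < p.len := by
    intro i hi
    rw [← hl']
    push_cast
    exact (ENat.add_lt_add_iff_right (by simp)).2 hi
  have hle : ∀ i : ℕ, (i : ℕ∞) ≤ l' ↔ ((i + 1 : ℕ) : ℕ∞) ≤ p.len := by
    intro i
    rw [← hl']
    push_cast
    exact (ENat.add_le_add_iff_right (by simp)).symm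
  by_cases hex : ∃ n : ℕ, (n : ℕ∞) < p.len ∧ p.acts n ∈ r (p.states 0)
  · obtain ⟨hn, hnr⟩ := Nat.find_spec hex
    have hmin : ∀ i < Nat.find hex, p.acts i ∉ r (p.states 0) := by
      intro i hi hi2
      exact Nat.find_min hex hi ⟨lt_trans (by exact_mod_cast hi) hn, hi2⟩
    generalize Nat.find hex = n at hn hnr hmin
    by_cases hn0 : n = 0
    · subst hn0
      refine ⟨p.acts 0, ⟨fun i => p.states (i + 1), fun i => p.acts (i + 1), l', fun i hi => p.valid _ (hlt i hi)⟩,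
        hnr, p.valid 0 hn, Or.inr ⟨0, hn, hl', by simp, by simp, ?_, by simp⟩⟩
      funext i
      simp [TPath.labelSeq, hle]
    · obtain ⟨a, t, har, haI, hau, ht, htt⟩ := prefix_lemma Tr I r hdet hstub p n
        (by exact_mod_cast Nat.pos_of_ne_zero hn0) hn.le (fun i hi => hmin i (by exact_mod_cast hi))
      have hrun : FinRun Tr n p.states p.acts := fun i hi => p.valid i (lt_trans (by exact_mod_cast hi) hn)
      obtain ⟨σ, hσ0, -, -⟩ := (hstub (p.states 0)).1 _ hnr n p.states p.acts _ rfl hrun hmin (p.valid n hn)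
      have hna : p.acts n = a := hau _ hnr ⟨_, hσ0⟩
      have htn : p.states (n + 1) = t n := by
        have := p.valid n hn
        rw [hna] at this
        exact hdet _ _ _ _ this (ht n le_rfl)
      have hL : ∀ i ≤ n, L (t i) = L (p.states i) := fun i hi =>
        (hI a haI _ _ (ht i (by exact_mod_cast hi))).symm
      have hn1 : ((n + 1 : ℕ) : ℕ∞) ≤ p.len := by
        have := Order.add_one_le_of_lt hn
        exact_mod_cast this
      refine ⟨a, ⟨fun i => if i ≤ n then t i else p.states (i + 1),
        fun i => if i < n then p.acts i else p.acts (i + 1), l', ?_⟩, har, ?_,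
        Or.inr ⟨n, hn, hl', hmin, ?_, ?_, ?_⟩⟩
      · intro i hi
        rcases lt_trichotomy i n with h | h | h
        · rw [if_pos h.le, if_pos h, if_pos (by omega)]
          exact htt i (by exact_mod_cast h)
        · subst h
          rw [if_pos le_rfl, if_neg (by omega), if_neg (by omega), ← htn]
          exact p.valid _ (hlt _ hi)
        · rw [if_neg (by omega), if_neg (by omega), if_neg (by omega)]
          exact p.valid _ (hlt _ hi)
      · simpa using ht 0 (by simp)
      · intro i hi
        simp [hi]
      · funext i
        simp only [TPath.labelSeq, hle]
        rcases lt_trichotomy i n with h | h | h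
        · have h1 : ((i + 1 : ℕ) : ℕ∞) ≤ p.len := le_trans (by exact_mod_cast (by omega)) hn1
          have h2 : (i : ℕ∞) ≤ p.len := le_trans (by exact_mod_cast (by omega)) hn1
          rw [if_pos h1, if_pos h, if_pos h2, if_pos h.le, hL i h.le]
        · subst h
          simp [htn]
        · rw [if_neg (show ¬ i ≤ n by omega), if_neg (show ¬ i < n by omega)]
      · intro _
        simp only [TPath.labelSeq]
        rw [if_pos hn.le, if_pos hn1, htn, hL n le_rfl]
  · push Not at hex
    obtain ⟨a, t, har, haI, hau, ht, htt⟩ := prefix_lemma Tr I r hdet hstub p p.len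
      (pos_iff_ne_zero.2 hlen) le_rfl hex
    refine ⟨a, ⟨t, p.acts, p.len, htt⟩, har, ht 0 (by simp), Or.inl ⟨rfl, rfl, hex, ?_⟩⟩
    funext i
    simp only [TPath.labelSeq]
    split_ifs with h
    · rw [hI a haI _ _ (ht i h)]
    · rfl

theorem no_chain {S A : Type*} (Tr : S → A → S → Prop) (s0 : S) (I : Set A) (r : S → Set A)
    (hcondL : CondL Tr I r s0) (hfin : {s | RedReach Tr r s0 s}.Finite)
    (b : A) (hb : b ∉ I) (Q : TPath Tr → Prop)
    (hQ : ∀ p, Q p → RedReach Tr r s0 (p.states 0) ∧ b ∉ r (p.states 0) ∧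
      ∃ a p', a ∈ r (p.states 0) ∧ Tr (p.states 0) a (p'.states 0) ∧ Q p')
    (p : TPath Tr) : ¬ Q p := by
  intro hp
  have hstep : ∀ x : {p : TPath Tr // Q p}, ∃ (y : {p : TPath Tr // Q p}) (a : A),
      a ∈ r (x.1.states 0) ∧ Tr (x.1.states 0) a (y.1.states 0) := by
    intro x
    obtain ⟨_, _, a, p', h1, h2, h3⟩ := hQ x.1 x.2
    exact ⟨⟨p', h3⟩, a, h1, h2⟩
  choose f α hα hT using hstep
  let x : ℕ → {p : TPath Tr // Q p} := fun k => f^[k] ⟨p, hp⟩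
  have hx : ∀ k, x (k + 1) = f (x k) := fun k => Function.iterate_succ_apply' _ _ _
  have hred : ∀ k, RedTr Tr r s0 ((x k).1.states 0) (α (x k)) ((x (k + 1)).1.states 0) := by
    intro k
    rw [hx]
    exact ⟨(hQ _ (x k).2).1, hα _, hT _⟩
  have hnb : ∀ k, b ∉ r ((x k).1.states 0) := fun k => (hQ _ (x k).2).2.1
  obtain ⟨i, j, hij, he⟩ : ∃ i j : ℕ, i < j ∧ (x i).1.states 0 = (x j).1.states 0 := by
    obtain ⟨i, -, j, -, hne, he⟩ := Set.infinite_univ.exists_ne_map_eq_of_mapsTo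
      (f := fun k : ℕ => (x k).1.states 0) (t := {s | RedReach Tr r s0 s})
      (fun k _ => (hQ _ (x k).2).1) hfin
    rcases lt_or_gt_of_ne hne with h | h
    · exact ⟨i, j, h, he⟩
    · exact ⟨j, i, h, he.symm⟩
  obtain ⟨k, -, hk⟩ := hcondL b hb (j - i) (fun k => (x (i + k)).1.states 0) (fun k => α (x (i + k)))
    (by omega) (fun k _ => hred (i + k)) (by
      change (x (i + (j - i))).1.states 0 = (x (i + 0)).1.states 0
      rw [show i + (j - i) = j by omega, add_zero, he])
  exact hnb _ hk

theorem finite_case {S A l : Type*} (Tr : S → A → S → Prop) (s0 : S) (L : S → Set l) (I : Set A)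
    (hI : InvisibleSet Tr L I) (r : S → Set A)
    (hdet : ∀ s a t t', Tr s a t → Tr s a t' → t = t')
    (hstub : ∀ s, CondD1 Tr r s ∧ CondD2w Tr r s ∧ CondV Tr I r s ∧ CondI Tr I r s ∧
      CondC4 Tr r s)
    (hcondL : CondL Tr I r s0)
    (hfin : {s | RedReach Tr r s0 s}.Finite) (n : ℕ) :
    ∀ p : TPath Tr, p.len = n → RedReach Tr r s0 (p.states 0) →
      ∃ q : TPath (RedTr Tr r s0), q.states 0 = p.states 0 ∧ q.len ≠ ⊤ ∧
        nsTrace (q.labelSeq L) = nsTrace (p.labelSeq L) := by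
  induction n with
  | zero =>
    intro p hp _
    refine ⟨⟨p.states, p.acts, 0, by simp⟩, rfl, by simp, ?_⟩
    congr 1
    funext i
    simp [TPath.labelSeq, hp]
  | succ n ih =>
    intro p hp hreach
    by_contra hno
    by_cases hvis : ∃ j : ℕ, (j : ℕ∞) < p.len ∧ p.acts j ∉ I
    · obtain ⟨j, hj, hb⟩ := hvis
      refine no_chain Tr s0 I r hcondL hfin (p.acts j) hb
        (fun p₁ => p₁.len = p.len ∧ p₁.acts = p.acts ∧ RedReach Tr r s0 (p₁.states 0) ∧
          ¬ ∃ q : TPath (RedTr Tr r s0), q.states 0 = p₁.states 0 ∧ q.len ≠ ⊤ ∧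
            nsTrace (q.labelSeq L) = nsTrace (p₁.labelSeq L)) ?_ p ⟨rfl, rfl, hreach, hno⟩
      rintro p₁ ⟨hlen, hacts, hr1, hno1⟩
      have hlen0 : p₁.len ≠ 0 := by
        rw [hlen, hp]
        exact_mod_cast Nat.succ_ne_zero n
      obtain ⟨a, p', ha, hT, hcase⟩ := step_lemma Tr L I hI r hdet hstub p₁ hlen0
      have hr' : RedReach Tr r s0 (p'.states 0) := RedReach.step hr1 ha hT
      have hcons : ∀ q : TPath (RedTr Tr r s0), q.states 0 = p'.states 0 → q.len ≠ ⊤ →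
          ∃ q₁ : TPath (RedTr Tr r s0), q₁.states 0 = p₁.states 0 ∧ q₁.len ≠ ⊤ ∧
            q₁.labelSeq L 0 = some (L (p₁.states 0)) ∧
            ∀ i, q₁.labelSeq L (i + 1) = q.labelSeq L i := by
        intro q hq0 hqlen
        refine ⟨⟨fun i => Nat.casesOn i (p₁.states 0) q.states, fun i => Nat.casesOn i a q.acts,
          q.len + 1, ?_⟩, rfl, ?_, ?_, ?_⟩
        · rintro (_ | i) hi
          · change RedTr Tr r s0 (p₁.states 0) a (q.states 0)
            rw [hq0]
            exact ⟨hr1, ha, hT⟩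
          · refine q.valid i ?_
            push_cast at hi
            exact (ENat.add_lt_add_iff_right (by simp)).1 hi
        · simpa using hqlen
        · simp [TPath.labelSeq]
        · intro i
          have : ((i + 1 : ℕ) : ℕ∞) ≤ q.len + 1 ↔ (i : ℕ∞) ≤ q.len := by
            push_cast
            exact ENat.add_le_add_iff_right (by simp)
          simp only [TPath.labelSeq, this]
      have hp0 : ∀ p : TPath Tr, p.labelSeq L 0 = some (L (p.states 0)) := by
        intro p
        simp [TPath.labelSeq]
      have hq0' : ∀ p : TPath (RedTr Tr r s0), p.labelSeq L 0 = some (L (p.states 0)) := by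
        intro p
        simp [TPath.labelSeq]
      rcases hcase with ⟨h1, h2, h3, h4⟩ | ⟨m, hm, h2, h3, h4, h5, h6⟩
      · refine ⟨hr1, ?_, a, p', ha, hT, h1.trans hlen, h2.trans hacts, hr', ?_⟩
        · rw [← hacts]
          exact h3 j (hlen ▸ hj)
        · rintro ⟨q, hq0, hql, hqt⟩
          obtain ⟨q₁, e1, e2, e3, e4⟩ := hcons q hq0 hql
          refine hno1 ⟨q₁, e1, e2, ?_⟩
          rw [← h4, ← hqt, ← nsTrace_tail_eq]
          · simp only [e4]
          · rw [e4, e3, hq0', hq0, ← hp0, ← hp0, h4]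
      · exfalso
        obtain ⟨q, hq0, hql, hqt⟩ := ih p' (by
          rw [hlen, hp] at h2
          push_cast at h2
          exact ENat.add_left_injective_of_ne_top (n := 1) (by simp) h2) hr'
        obtain ⟨q₁, e1, e2, e3, e4⟩ := hcons q hq0 hql
        refine hno1 ⟨q₁, e1, e2, ?_⟩
        have hlab0 : q₁.labelSeq L 1 = p'.labelSeq L 0 := by rw [e4, hq0', hq0, hp0]
        by_cases hm0 : m = 0
        · subst hm0
          simp only [Nat.not_lt_zero, if_false] at h5
          refine nsTrace_congr_tail _ _ (by simp [e3]) (by rw [e3, hp0]) ?_ ?_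
          · rw [hlab0, h5]
          · simp only [e4]
            rw [← h5, ← hqt]
        · have : nsTrace (p'.labelSeq L) = nsTrace (p₁.labelSeq L) := by
            rw [h5]
            exact nsTrace_remove _ _ (h6 hm0)
          rw [← this, ← hqt, ← nsTrace_tail_eq]
          · simp only [e4]
          · rw [hlab0, e3, h5, ← hp0]
            simp [Nat.pos_of_ne_zero hm0]
    · push Not at hvis
      apply hno
      refine ⟨⟨p.states, p.acts, 0, by simp⟩, rfl, by simp, ?_⟩
      have hc : ∀ i : ℕ, (i : ℕ∞) ≤ p.len → L (p.states i) = L (p.states 0) := by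
        intro i
        induction i with
        | zero => intro _; rfl
        | succ i ih2 =>
          intro hi
          have hi' : (i : ℕ∞) < p.len := lt_of_lt_of_le (by exact_mod_cast Nat.lt_succ_self i) hi
          rw [← ih2 hi'.le]
          exact (hI _ (hvis i hi') _ _ (p.valid i hi')).symm
      have e1 : p.labelSeq L = fun i => if i ≤ n + 1 then some (L (p.states 0)) else none := by
        funext i
        simp only [TPath.labelSeq]
        have hiff : (i : ℕ∞) ≤ p.len ↔ i ≤ n + 1 := by
          rw [hp]
          norm_cast
        by_cases h : i ≤ n + 1
        · rw [if_pos (hiff.2 h), if_pos h, hc i (hiff.2 h)]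
        · rw [if_neg (fun h' => h (hiff.1 h')), if_neg h]
      rw [e1, nsTrace_const_fin]
      congr 1
      funext i
      simp only [TPath.labelSeq]
      rcases i with _ | i <;> simp

theorem infinite_case {S A l : Type*} (Tr : S → A → S → Prop) (s0 : S) (L : S → Set l) (I : Set A)
    (hI : InvisibleSet Tr L I) (r : S → Set A)
    (hdet : ∀ s a t t', Tr s a t → Tr s a t' → t = t')
    (hstub : ∀ s, CondD1 Tr r s ∧ CondD2w Tr r s ∧ CondV Tr I r s ∧ CondI Tr I r s ∧
      CondC4 Tr r s)
    (hcondL : CondL Tr I r s0)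
    (hfin : {s | RedReach Tr r s0 s}.Finite)
    (p : TPath Tr) (hp : p.len = ⊤) (hreach : RedReach Tr r s0 (p.states 0)) :
      ∃ q : TPath (RedTr Tr r s0), q.states 0 = p.states 0 ∧ q.len = ⊤ ∧
        nsTrace (q.labelSeq L) = nsTrace (p.labelSeq L) := by
  have hstep : ∀ p : TPath Tr, ∃ (a : A) (p' : TPath Tr), p.len = ⊤ → 
      (p'.len = ⊤ ∧ a ∈ r (p.states 0) ∧ Tr (p.states 0) a (p'.states 0) ∧
      ((p'.acts = p.acts ∧
          (∀ i : ℕ, p.acts i ∉ r (p.states 0)) ∧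
          p'.labelSeq L = p.labelSeq L) ∨
        ∃ n : ℕ, 
          (∀ i < n, p.acts i ∉ r (p.states 0)) ∧
          (∀ i < n, p'.acts i = p.acts i) ∧
          (p'.labelSeq L = fun i => if i < n then p.labelSeq L i else p.labelSeq L (i + 1)) ∧
          (n ≠ 0 → p.labelSeq L n = p.labelSeq L (n + 1)))) := by
    intro p
    by_cases h : p.len = ⊤
    · obtain ⟨a, p', ha, hT, hcase⟩ := step_lemma Tr L I hI r hdet hstub p (by simp [h])
      refine ⟨a, p', fun _ => ⟨?_, ha, hT, ?_⟩⟩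
      · rcases hcase with ⟨h1, -⟩ | ⟨m, hm, h2, -⟩
        · rw [h1, h]
        · rw [h] at h2
          simpa using h2
      · rcases hcase with ⟨h1, h2, h3, h4⟩ | ⟨m, hm, h2, h3⟩
        · exact Or.inl ⟨h2, fun i => h3 i (by rw [h]; exact ENat.natCast_lt_top i), h4⟩
        · exact Or.inr ⟨m, h3⟩
    · exact ⟨p.acts 0, p, fun h' => absurd h' h⟩
  choose act f hf using hstep
  have hit : ∀ p : TPath Tr, p.len = ⊤ → RedReach Tr r s0 (p.states 0) →
      ∀ k, (f^[k] p).len = ⊤ ∧ RedReach Tr r s0 ((f^[k] p).states 0) := by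
    intro p hp hr k
    induction k with
    | zero => exact ⟨hp, hr⟩
    | succ k ih =>
      rw [Function.iterate_succ_apply']
      obtain ⟨h1, h2, h3, -⟩ := hf _ ih.1
      exact ⟨h1, RedReach.step ih.2 h2 h3⟩
  let H : TPath Tr → ℕ → Option (Set l) := fun p k => some (L ((f^[k] p).states 0))
  have hHtail : ∀ p, (fun i => H p (i + 1)) = H (f p) := by
    intro p
    funext i
    simp only [H, Function.iterate_succ_apply]
  have hlab : ∀ p : TPath Tr, p.len = ⊤ → ∀ i, p.labelSeq L i = some (L (p.states i)) := by
    intro p hp i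
    simp [TPath.labelSeq, hp]
  have hH0 : ∀ p : TPath Tr, p.len = ⊤ → H p 0 = p.labelSeq L 0 := by
    intro p hp
    rw [hlab p hp]
    rfl
  have hH1 : ∀ p : TPath Tr, p.len = ⊤ → H p 1 = (f p).labelSeq L 0 := by
    intro p hp
    rw [hlab _ (hf p hp).1]
    rfl
  have hconst : ∀ p : TPath Tr, p.len = ⊤ → (∀ j, p.labelSeq L j = p.labelSeq L (j + 1)) →
      H p = p.labelSeq L := by
    intro p hp hc
    have hc0 : ∀ j, p.labelSeq L j = p.labelSeq L 0 := by
      intro j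
      induction j with
      | zero => rfl
      | succ j ih => rw [← hc, ih]
    have hk : ∀ k, (f^[k] p).len = ⊤ ∧ (f^[k] p).labelSeq L = p.labelSeq L := by
      intro k
      induction k with
      | zero => exact ⟨hp, rfl⟩
      | succ k ih =>
        rw [Function.iterate_succ_apply']
        obtain ⟨h1, h2, h3, h4⟩ := hf _ ih.1
        refine ⟨h1, ?_⟩
        rcases h4 with ⟨-, -, h4⟩ | ⟨n, -, -, h4, -⟩
        · rw [h4, ih.2]
        · rw [h4, ih.2]
          funext i
          simp only [hc0, ite_self]
    funext k
    rw [hc0, ← (hk k).2, hlab _ (hk k).1]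
  have main : ∀ k j : ℕ, ∀ p : TPath Tr, p.len = ⊤ → RedReach Tr r s0 (p.states 0) →
      p.labelSeq L j ≠ p.labelSeq L (j + 1) → nsTrace (H p) k = nsTrace (p.labelSeq L) k := by
    intro k
    induction k using Nat.strong_induction_on with
    | _ k ihk =>
    intro j
    induction j using Nat.strong_induction_on with
    | _ j ihj =>
    intro p hp hr hj
    by_contra hbad
    have hb : p.acts j ∉ I := by
      intro hb
      apply hj
      rw [hlab p hp, hlab p hp, hI _ hb _ _ (p.valid j (by rw [hp]; exact ENat.natCast_lt_top j))]
    refine no_chain Tr s0 I r hcondL hfin (p.acts j) hb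
      (fun p₁ => p₁.len = ⊤ ∧ RedReach Tr r s0 (p₁.states 0) ∧ p₁.acts j = p.acts j ∧
        p₁.labelSeq L j ≠ p₁.labelSeq L (j + 1) ∧
        nsTrace (H p₁) k ≠ nsTrace (p₁.labelSeq L) k) ?_ p ⟨hp, hr, rfl, hj, hbad⟩
    rintro p₁ ⟨hp1, hr1, ha1, hj1, hbad1⟩
    obtain ⟨hl', har, hT, hcase⟩ := hf p₁ hp1
    have hr' := RedReach.step hr1 har hT
    have hsome : (p₁.labelSeq L 0).isSome := by rw [hlab _ hp1]; rfl
    have hHsome : (H p₁ 0).isSome := rfl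
    rcases hcase with ⟨h2, h3, h4⟩ | ⟨n, h3, h4, h5, h6⟩
    · refine ⟨hr1, ha1 ▸ h3 j, act p₁, f p₁, har, hT, hl', hr', by rw [h2, ha1], by rwa [h4], ?_⟩
      rwa [← hHtail, nsTrace_tail_eq, h4]
      rw [hH0 _ hp1, hH1 _ hp1, h4]
    by_cases hn0 : n = 0
    · exfalso
      subst hn0
      simp only [Nat.not_lt_zero, if_false] at h5
      have e0 := hH0 _ hp1
      have e1 : H p₁ 1 = p₁.labelSeq L 1 := by rw [hH1 _ hp1, h5]
      by_cases hch : p₁.labelSeq L 0 = p₁.labelSeq L 1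
      · rw [← nsTrace_tail_eq (H p₁) (by rw [e0, e1, hch]), ← nsTrace_tail_eq _ hch,
          hHtail, ← h5] at hbad1
        rcases j with _ | j
        · exact hj1 hch
        · refine hbad1 (ihj j (Nat.lt_succ_self j) _ hl' hr' ?_)
          rw [h5]
          exact hj1
      · rcases k with _ | k
        · rw [nsTrace_zero _ hsome, nsTrace_zero _ hHsome] at hbad1
          exact hbad1 e0
        · rw [nsTrace_tail_ne _ hsome hch, nsTrace_tail_ne _ hHsome (by rwa [e0, e1]), hHtail,
            ← h5] at hbad1
          by_cases hcc : ∃ j', (f p₁).labelSeq L j' ≠ (f p₁).labelSeq L (j' + 1)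
          · obtain ⟨j', hj'⟩ := hcc
            exact hbad1 (ihk k (Nat.lt_succ_self k) j' _ hl' hr' hj')
          · push Not at hcc
            rw [hconst _ hl' hcc] at hbad1
            exact hbad1 rfl
    · have hG : nsTrace ((f p₁).labelSeq L) = nsTrace (p₁.labelSeq L) := by
        rw [h5]
        exact nsTrace_remove _ _ (h6 hn0)
      have hHH : nsTrace (H (f p₁)) = nsTrace (H p₁) := by
        rw [← hHtail, nsTrace_tail_eq]
        rw [hH0 _ hp1, hH1 _ hp1, h5]
        simp [Nat.pos_of_ne_zero hn0]
      rw [← hG, ← hHH] at hbad1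
      rcases lt_trichotomy n j with h | h | h
      · exfalso
        refine hbad1 (ihj (j - 1) (by omega) _ hl' hr' ?_)
        simp only [h5]
        rw [if_neg (by omega), if_neg (by omega), show j - 1 + 1 = j by omega]
        exact hj1
      · subst h
        exact absurd (h6 hn0) hj1
      · refine ⟨hr1, ha1 ▸ h3 j h, act p₁, f p₁, har, hT, hl', hr', by rw [h4 j h, ha1], ?_, hbad1⟩
        simp only [h5]
        rw [if_pos h]
        by_cases h7 : j + 1 < n
        · rwa [if_pos h7]
        · have : n = j + 1 := by omega
          subst this
          rw [if_neg h7, ← h6 hn0]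
          exact hj1
  refine ⟨⟨fun k => (f^[k] p).states 0, fun k => act (f^[k] p), ⊤, ?_⟩, rfl, rfl, ?_⟩
  · intro k _
    obtain ⟨h1, h2⟩ := hit p hp hreach k
    obtain ⟨-, h3, h4, -⟩ := hf _ h1
    simp only [Function.iterate_succ_apply']
    exact ⟨h2, h3, h4⟩
  · have : (TPath.labelSeq (Tr := RedTr Tr r s0) ⟨fun k => (f^[k] p).states 0, fun k => act (f^[k] p), ⊤, by
        intro k _
        obtain ⟨h1, h2⟩ := hit p hp hreach k
        obtain ⟨-, h3, h4, -⟩ := hf _ h1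
        simp only [Function.iterate_succ_apply']
        exact ⟨h2, h3, h4⟩⟩ L) = H p := by
      funext k
      simp [TPath.labelSeq, H]
    rw [this]
    by_cases hcc : ∃ j', p.labelSeq L j' ≠ p.labelSeq L (j' + 1)
    · obtain ⟨j, hj⟩ := hcc
      funext k
      exact main k j p hp hreach hj
    · push Not at hcc
      rw [hconst p hp hcc]

/-- Let `TS` be a deterministic LSTS and `r` a reduction function
satisfying D1, D2w, V, I, L and C4 at every state, and suppose the reduced LSTS `TS_r`
has finitely many states.  Then `TS_r` is stutter-trace equivalent to `TS`. -/
theorem deterministic_stubborn_with_C4_preserves_stutter_trace_equivalence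
    {S A l : Type*} (Tr : S → A → S → Prop) (s0 : S) (L : S → Set l) (I : Set A)
    (hI : InvisibleSet Tr L I) (r : S → Set A)
    (hdet : ∀ s a t t', Tr s a t → Tr s a t' → t = t')
    (hstub : ∀ s, CondD1 Tr r s ∧ CondD2w Tr r s ∧ CondV Tr I r s ∧ CondI Tr I r s ∧
      CondC4 Tr r s)
    (hcondL : CondL Tr I r s0)
    (hfin : {s | RedReach Tr r s0 s}.Finite) :
    StutterTraceEquiv (RedTr Tr r s0) s0 L Tr s0 L := by
  refine ⟨fun p hp => ?_, fun q hq => ?_⟩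
  · exact ⟨⟨p.states, p.acts, p.len, fun i hi => (p.valid i hi).2.2⟩, hp, Iff.rfl, rfl⟩
  · have hreach : RedReach Tr r s0 (q.states 0) := hq ▸ RedReach.refl
    by_cases hlen : q.len = ⊤
    · obtain ⟨p, h1, h2, h3⟩ := infinite_case Tr s0 L I hI r hdet hstub hcondL hfin q hlen hreach
      exact ⟨p, h1.trans hq, by simp [h2, hlen], h3⟩
    · obtain ⟨n, hn⟩ := ENat.ne_top_iff_exists.1 hlen
      obtain ⟨p, h1, h2, h3⟩ := finite_case Tr s0 L I hI r hdet hstub hcondL hfin n q hn.symm hreach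
      exact ⟨p, h1.trans hq, by simp [h2, hlen], h3⟩
end

section
/- Under reach value invisibility, the LSTS underlying a Petri net is labelled consistently for linear propositions: for all paths π, π' through reachable markings starting in a common reachable marking, if π and π' are weakly equivalent with respect to the set of reach value invisible structural transitions, then π and π' are stutter equivalent under the labelling L_l by linear propositions. -/
open scoped Classical

/-- A Petri net over places `P` and structural transitions `T`:
`pre p t = W(p,t)`, `post t p = W(t,p)`, and initial marking `m0`. -/
structure PetriNet (P T : Type*) where
  pre : P → T → ℕ
  post : T → P → ℕ
  m0 : P → ℕ

/-- The firing relation of a Petri net: `m -t→ m'` iff `W(p,t) ≤ m(p)` and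
`m'(p) = m(p) - W(p,t) + W(t,p)` for all places `p`. -/
def PetriNet.Fires {P T : Type*} (N : PetriNet P T) (m : P → ℕ) (t : T) (m' : P → ℕ) : Prop :=
  ∀ p, N.pre p t ≤ m p ∧ m' p = m p - N.pre p t + N.post t p

/-- Comparison operators `⋈ ∈ {<, ≤, >, ≥, =, ≠}`. -/
inductive Cmp : Type
  | lt | le | gt | ge | eq | ne

/-- Semantics of the comparison operators. -/
def Cmp.holds : Cmp → ℤ → ℤ → Prop
  | .lt, x, y => x < y
  | .le, x, y => x ≤ y
  | .gt, x, y => x > y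
  | .ge, x, y => x ≥ y
  | .eq, x, y => x = y
  | .ne, x, y => x ≠ y

/-- A linear proposition `k₁·p₁ + ⋯ + kₙ·pₙ ⋈ k`. -/
structure LinProp (P : Type*) where
  coef : P → ℤ
  cmp : Cmp
  const : ℤ

/-- The value of the linear left-hand side of a linear proposition in a marking. -/
def LinProp.value {P : Type*} [Fintype P] (q : LinProp P) (m : P → ℕ) : ℤ :=
  ∑ p, q.coef p * (m p : ℤ)

/-- Satisfaction of a linear proposition in a marking. -/
def LinProp.sat {P : Type*} [Fintype P] (q : LinProp P) (m : P → ℕ) : Prop :=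
  q.cmp.holds (q.value m) q.const

/-- A polynomial proposition `f(p₁,…,pₙ) ⋈ k`. -/
structure PolyProp (P : Type*) where
  poly : MvPolynomial P ℤ
  cmp : Cmp
  const : ℤ

/-- The value of the left-hand-side polynomial of a polynomial proposition in a marking. -/
noncomputable def PolyProp.value {P : Type*} (q : PolyProp P) (m : P → ℕ) : ℤ :=
  MvPolynomial.eval (fun p => (m p : ℤ)) q.poly

/-- Satisfaction of a polynomial proposition in a marking. -/
def PolyProp.sat {P : Type*} (q : PolyProp P) (m : P → ℕ) : Prop :=
  q.cmp.holds (q.value m) q.const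

theorem subseq_eq_some_iff {α : Type*} (g : ℕ → Option α) (P : ℕ → Prop) [DecidablePred P] (k : ℕ) (a : α) :
    subseq g P k = some a ↔ ∃ i, P i ∧ Nat.count P i = k ∧ g i = some a := by
  unfold subseq
  constructor
  · intro h
    split_ifs at h with hk
    have hk' : ∀ hf : (Set.ofPred P).Finite, k < hf.toFinset.card := by
      intro hf
      rcases hk with hk | hk
      · exact absurd hf hk
      · rwa [← Set.ncard_eq_toFinset_card _ hf]
    exact ⟨Nat.nth P k, Nat.nth_mem k hk', Nat.count_nth hk', h⟩
  · rintro ⟨i, hi, rfl, hg⟩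
    have hv : {i | P i}.Infinite ∨ Nat.count P i < {i | P i}.ncard := by
      by_cases hf : (Set.ofPred P).Finite
      · right
        have := Nat.count_lt_card hf hi
        rwa [← Set.ncard_eq_toFinset_card _ hf] at this
      · exact Or.inl hf
    rw [if_pos hv, Nat.nth_count hi, hg]

theorem nsTrace_stretch {α : Type*} (g f : ℕ → Option α) (c : ℕ → ℕ) (len : ℕ∞)
    (hc0 : c 0 = 0) (hc : ∀ i : ℕ, (i : ℕ∞) < len → c (i + 1) = c i ∨ c (i + 1) = c i + 1)
    (hg : ∀ i : ℕ, (i : ℕ∞) ≤ len → (g i).isSome ∧ g i = f (c i))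
    (hn : ∀ i : ℕ, (g i).isSome → (i : ℕ∞) ≤ len)
    (hf : ∀ k, (f k).isSome → ∃ i : ℕ, (i : ℕ∞) ≤ len ∧ c i = k) :
    nsTrace g = nsTrace f := by
  have hlt : ∀ i : ℕ, ((i + 1 : ℕ) : ℕ∞) ≤ len → (i : ℕ∞) < len := fun i h =>
    lt_of_lt_of_le (by exact_mod_cast Nat.lt_succ_self i) h
  unfold nsTrace
  set A : ℕ → Prop := fun i => (g i).isSome ∧ (i = 0 ∨ g i ≠ g (i - 1)) with hA
  set R : ℕ → Prop := fun i => (f i).isSome ∧ (i = 0 ∨ f i ≠ f (i - 1)) with hR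
  have hA0 : A 0 := ⟨(hg 0 (by simp)).1, Or.inl rfl⟩
  have hR0 : R 0 := by
    refine ⟨?_, Or.inl rfl⟩
    have := hg 0 (by simp)
    rw [hc0] at this
    exact this.2 ▸ this.1
  have hs1 : ∀ i : ℕ, ((i + 1 : ℕ) : ℕ∞) ≤ len → c (i + 1) = c i → ¬ A (i + 1) := by
    rintro i hi he ⟨-, h | h⟩
    · omega
    · apply h
      rw [(hg _ hi).2, he, Nat.add_sub_cancel, (hg i (hlt i hi).le).2]
  have hs2 : ∀ i : ℕ, ((i + 1 : ℕ) : ℕ∞) ≤ len → c (i + 1) = c i + 1 →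
      (A (i + 1) ↔ R (c i + 1)) := by
    intro i hi he
    have h1 := hg _ hi
    have h2 := hg i (hlt i hi).le
    rw [he] at h1
    simp only [hA, hR, Nat.add_sub_cancel, h1.2, h2.2]
    simp
  have hcount : ∀ i : ℕ, (i : ℕ∞) ≤ len → Nat.count A (i + 1) = Nat.count R (c i + 1) := by
    intro i
    induction i with
    | zero => intro _; simp [hc0, Nat.count_succ, hA0, hR0]
    | succ i ih =>
      intro hi
      have ih := ih (hlt i hi).le
      rcases hc i (hlt i hi) with h | h
      · rw [Nat.count_succ, if_neg (hs1 i hi h), h, ih, add_zero]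
      · rw [Nat.count_succ, h, Nat.count_succ R, ih]
        simp only [hs2 i hi h]
  have hAR : ∀ i, A i → R (c i) := by
    intro i hi
    have hl := hn i hi.1
    cases i with
    | zero => rw [hc0]; exact hR0
    | succ i =>
      rcases hc i (hlt i hl) with h | h
      · exact absurd hi (hs1 i hl h)
      · rw [h]; exact (hs2 i hl h).1 hi
  have hcnt : ∀ i, A i → Nat.count A i = Nat.count R (c i) := by
    intro i hi
    have := hcount i (hn i hi.1)
    rw [Nat.count_succ, Nat.count_succ, if_pos hi, if_pos (hAR i hi)] at this
    omega
  have hex : ∀ j, R j → ∃ i, A i ∧ c i = j := by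
    intro j hj
    have hex := hf j hj.1
    obtain ⟨hl, hcj⟩ := Nat.find_spec hex
    have hmin := fun m => Nat.find_min hex (m := m)
    generalize Nat.find hex = i at hl hcj hmin
    refine ⟨i, ?_, hcj⟩
    cases i with
    | zero => exact hA0
    | succ i =>
      have hi : c i ≠ j := fun h => hmin i (Nat.lt_succ_self i) ⟨(hlt i hl).le, h⟩
      rcases hc i (hlt i hl) with h | h
      · exact absurd (h.symm.trans hcj) hi
      · rw [hs2 i hl h, ← h, hcj]; exact hj
  funext k
  apply Option.ext
  intro a
  rw [subseq_eq_some_iff, subseq_eq_some_iff]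
  constructor
  · rintro ⟨i, hi, hk, ha⟩
    exact ⟨c i, hAR i hi, (hcnt i hi).symm.trans hk, (hg i (hn i hi.1)).2 ▸ ha⟩
  · rintro ⟨j, hj, hk, ha⟩
    obtain ⟨i, hi, rfl⟩ := hex j hj
    exact ⟨i, hi, (hcnt i hi).trans hk, (hg i (hn i hi.1)).2.trans ha⟩

theorem LinProp.value_fires {P T : Type*} [Fintype P] (N : PetriNet P T) (q : LinProp P)
    (m m' : P → ℕ) (t : T) (h : N.Fires m t m') :
    q.value m' = q.value m + ∑ x, q.coef x * ((N.post t x : ℤ) - N.pre x t) := by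
  unfold LinProp.value
  rw [← Finset.sum_add_distrib]
  refine Finset.sum_congr rfl fun x _ => ?_
  obtain ⟨h1, h2⟩ := h x
  rw [h2]
  push_cast [Nat.cast_sub h1]
  ring

/-- The label sequence determined by a start marking and a visible action word. -/
noncomputable def wordLabels {P T : Type*} [Fintype P] (N : PetriNet P T) (Q : Set (LinProp P))
    (m : P → ℕ) (w : ℕ → Option T) : ℕ → Option (Set (LinProp P)) := fun k =>
  if k = 0 ∨ (w (k - 1)).isSome then
    some {qp ∈ Q | qp.cmp.holds (qp.value m + ∑ j ∈ Finset.range k,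
      (w j).elim 0 fun t => ∑ x, qp.coef x * ((N.post t x : ℤ) - N.pre x t)) qp.const}
  else none

theorem nsTrace_path {P T : Type*} [Fintype P] (N : PetriNet P T) (Q : Set (LinProp P))
    (p : TPath N.Fires) (hr : Reach N.Fires N.m0 (p.states 0)) (I : Set T)
    (hI : ∀ t ∈ I, ∀ qp ∈ Q, ∀ m m', Reach N.Fires N.m0 m → N.Fires m t m' →
          LinProp.value qp m = LinProp.value qp m') :
    nsTrace (p.labelSeq fun m => {qp ∈ Q | qp.sat m}) =
      nsTrace (wordLabels N Q (p.states 0)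
        (subseq p.actSeq (fun i => (i : ℕ∞) < p.len ∧ p.acts i ∉ I))) := by
  have hlt : ∀ i : ℕ, ((i + 1 : ℕ) : ℕ∞) ≤ p.len → (i : ℕ∞) < p.len := fun i h =>
    lt_of_lt_of_le (by exact_mod_cast Nat.lt_succ_self i) h
  set V : ℕ → Prop := fun i => (i : ℕ∞) < p.len ∧ p.acts i ∉ I with hV
  set w := subseq p.actSeq V with hw
  have hreach : ∀ i : ℕ, (i : ℕ∞) ≤ p.len → Reach N.Fires N.m0 (p.states i) := by
    intro i
    induction i with
    | zero => exact fun _ => hr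
    | succ i ih => exact fun hi => (ih (hlt i hi).le).step (p.valid i (hlt i hi))
  have hwV : ∀ i, V i → w (Nat.count V i) = some (p.acts i) := by
    intro i hi
    rw [hw, subseq_eq_some_iff]
    exact ⟨i, hi, rfl, by simp [TPath.actSeq, hi.1]⟩
  have hval : ∀ i : ℕ, (i : ℕ∞) ≤ p.len → ∀ qp ∈ Q, qp.value (p.states i) =
      qp.value (p.states 0) + ∑ j ∈ Finset.range (Nat.count V i),
      (w j).elim 0 fun t => ∑ x, qp.coef x * ((N.post t x : ℤ) - N.pre x t) := by
    intro i
    induction i with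
    | zero => intro _ qp _; simp
    | succ i ih =>
      intro hi qp hq
      have ih := ih (hlt i hi).le qp hq
      by_cases h : V i
      · rw [Nat.count_succ, if_pos h, Finset.sum_range_succ, hwV i h, ← add_assoc, ← ih]
        exact LinProp.value_fires N qp _ _ _ (p.valid i (hlt i hi))
      · rw [Nat.count_succ, if_neg h, add_zero, ← ih]
        have hmem : p.acts i ∈ I := by
          by_contra hc
          exact h ⟨hlt i hi, hc⟩
        exact (hI _ hmem qp hq _ _ (hreach i (hlt i hi).le) (p.valid i (hlt i hi))).symm
  have hsome : ∀ i : ℕ, (i : ℕ∞) ≤ p.len →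
      Nat.count V i = 0 ∨ (w (Nat.count V i - 1)).isSome := by
    intro i
    induction i with
    | zero => intro _; simp
    | succ i ih =>
      intro hi
      by_cases h : V i
      · right
        rw [Nat.count_succ, if_pos h, Nat.add_sub_cancel, hwV i h]; rfl
      · rw [Nat.count_succ, if_neg h, add_zero]
        exact ih (hlt i hi).le
  apply nsTrace_stretch _ _ (Nat.count V) p.len
  · simp
  · intro i _
    rw [Nat.count_succ]
    split_ifs <;> simp
  · intro i hi
    have e : p.labelSeq (fun m => {qp ∈ Q | qp.sat m}) i =
        some {qp ∈ Q | qp.sat (p.states i)} := by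
      simp [TPath.labelSeq, hi]
    refine ⟨by rw [e]; rfl, ?_⟩
    rw [e, wordLabels, if_pos (hsome i hi)]
    congr 1
    ext qp
    simp only [Set.mem_ofPred_eq, LinProp.sat]
    refine and_congr_right fun hq => ?_
    rw [hval i hi qp hq]
  · intro i h
    unfold TPath.labelSeq at h
    by_contra hc
    simp [hc] at h
  · intro k hk
    unfold wordLabels at hk
    split_ifs at hk with h
    · rcases Nat.eq_zero_or_pos k with rfl | hpos
      · exact ⟨0, by simp, by simp⟩
      · have h := h.resolve_left hpos.ne'
        obtain ⟨a, ha⟩ := Option.isSome_iff_exists.1 h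
        rw [hw, subseq_eq_some_iff] at ha
        obtain ⟨i, hi, hc, -⟩ := ha
        refine ⟨i + 1, ?_, ?_⟩
        · have := Order.add_one_le_of_lt hi.1
          exact_mod_cast this
        · rw [Nat.count_succ, if_pos hi]; omega
    · simp at hk

/-- Under reach value invisibility, the LSTS underlying a Petri net is
labelled consistently for linear propositions: paths through reachable markings starting
in a common reachable marking that are weakly equivalent w.r.t. the set of reach value
invisible structural transitions are stutter equivalent under the labelling by linear
propositions. -/
theorem petri_reach_value_invisibility_consistent_for_linear {P T : Type*}
    [Fintype P] [Fintype T] (N : PetriNet P T) (Q : Set (LinProp P)) :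
    ∀ p q : TPath N.Fires,
      Reach N.Fires N.m0 (p.states 0) → p.states 0 = q.states 0 →
      WeakEquiv {t : T | ∀ qp ∈ Q, ∀ m m', Reach N.Fires N.m0 m → N.Fires m t m' →
          LinProp.value qp m = LinProp.value qp m'} p q →
      StutterEquiv (fun m => {qp ∈ Q | qp.sat m}) (fun m => {qp ∈ Q | qp.sat m})
        p q := by
  intro p q hr h0 hw
  refine ⟨hw.1, ?_⟩
  have h1 := nsTrace_path N Q p hr
    {t : T | ∀ qp ∈ Q, ∀ m m', Reach N.Fires N.m0 m → N.Fires m t m' →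
          LinProp.value qp m = LinProp.value qp m'} (fun t ht => ht)
  have h2 := nsTrace_path N Q q (h0 ▸ hr)
    {t : T | ∀ qp ∈ Q, ∀ m m', Reach N.Fires N.m0 m → N.Fires m t m' →
          LinProp.value qp m = LinProp.value qp m'} (fun t ht => ht)
  rw [h1, h2, hw.2, h0]
end

section
/- Under value invisibility, the LSTS underlying a Petri net is labelled consistently for polynomial propositions: for all paths π, π' starting in a common marking, if π and π' are weakly equivalent with respect to the set of value invisible structural transitions, then π and π' are stutter equivalent under the labelling L_p by polynomial propositions. -/
open scoped Classical

theorem aux_valid_iff (P : ℕ → Prop) [DecidablePred P] (k : ℕ) :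
    ({i | P i}.Infinite ∨ k < {i | P i}.ncard) ↔ ∃ i, P i ∧ Nat.count P i = k := by
  constructor
  · intro h
    have h' : ∀ hf : (Set.ofPred P).Finite, k < hf.toFinset.card := by
      intro hf
      rcases h with h | h
      · exact absurd hf h
      · rwa [Set.ncard_eq_toFinset_card _ hf] at h
    exact ⟨Nat.nth P k, Nat.nth_mem k h', Nat.count_nth h'⟩
  · rintro ⟨i, hi, rfl⟩
    by_cases hf : {i | P i}.Finite
    · right
      rw [Set.ncard_eq_toFinset_card _ hf]
      exact Nat.count_lt_card hf hi
    · left; exact hf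

theorem aux_subseq_some {α : Type*} (g : ℕ → Option α) (P : ℕ → Prop) [DecidablePred P] (i : ℕ) (hi : P i) :
    subseq g P (Nat.count P i) = g i := by
  unfold subseq
  rw [if_pos ((aux_valid_iff P _).2 ⟨i, hi, rfl⟩), Nat.nth_count hi]

theorem aux_subseq_none {α : Type*} (g : ℕ → Option α) (P : ℕ → Prop) [DecidablePred P] (k : ℕ)
    (hk : ¬ ∃ i, P i ∧ Nat.count P i = k) : subseq g P k = none := by
  unfold subseq
  rw [if_neg (fun h => hk ((aux_valid_iff P _).1 h))]

theorem aux_subseq_congr {α : Type*} (g h : ℕ → Option α) (P R : ℕ → Prop) (c : ℕ → ℕ)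
    (hgh : ∀ i, P i → g i = h (c i)) (hPR : ∀ i, P i → R (c i))
    (hmono : ∀ i j, P i → P j → i < j → c i < c j)
    (hsurj : ∀ k, R k → ∃ i, P i ∧ c i = k) : subseq g P = subseq h R := by
  have hcount : ∀ i, P i → Nat.count R (c i) = Nat.count P i := by
    intro i hi
    rw [Nat.count_eq_card_filter_range, Nat.count_eq_card_filter_range]
    symm
    refine Finset.card_bij (fun a _ => c a) ?_ ?_ ?_
    · intro a ha
      simp only [Finset.mem_filter, Finset.mem_range] at ha ⊢
      exact ⟨hmono a i ha.2 hi ha.1, hPR a ha.2⟩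
    · intro a ha b hb hab
      simp only [Finset.mem_filter, Finset.mem_range] at ha hb
      rcases lt_trichotomy a b with h1 | h1 | h1
      · have := hmono a b ha.2 hb.2 h1; omega
      · exact h1
      · have := hmono b a hb.2 ha.2 h1; omega
    · intro b hb
      simp only [Finset.mem_filter, Finset.mem_range] at hb
      obtain ⟨a, ha, rfl⟩ := hsurj b hb.2
      refine ⟨a, ?_, rfl⟩
      simp only [Finset.mem_filter, Finset.mem_range]
      refine ⟨?_, ha⟩
      by_contra hcon
      rcases (not_lt.1 hcon).lt_or_eq with h1 | h1
      · have := hmono i a hi ha h1; omega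
      · subst h1; omega
  funext k
  by_cases hk : ∃ i, P i ∧ Nat.count P i = k
  · obtain ⟨i, hi, rfl⟩ := hk
    rw [aux_subseq_some g P i hi, ← hcount i hi, aux_subseq_some h R _ (hPR i hi), hgh i hi]
  · rw [aux_subseq_none g P k hk, aux_subseq_none]
    rintro ⟨j, hj, hjk⟩
    obtain ⟨i, hi, rfl⟩ := hsurj j hj
    exact hk ⟨i, hi, by rw [← hcount i hi, hjk]⟩

theorem aux_nsTrace {α : Type*} (g h : ℕ → Option α) (c : ℕ → ℕ) (hc0 : c 0 = 0)
    (hstep : ∀ i, c (i + 1) = c i ∨ c (i + 1) = c i + 1)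
    (hdown : ∀ i, (g (i + 1)).isSome → (g i).isSome)
    (hgh : ∀ i, (g i).isSome → g i = h (c i))
    (hsurj : ∀ k, (h k).isSome → ∃ i, (g i).isSome ∧ c i = k) :
    nsTrace g = nsTrace h := by
  have hmono : Monotone c := monotone_nat_of_le_succ (fun i => by rcases hstep i with e | e <;> omega)
  unfold nsTrace
  have key : ∀ i, (g (i+1)).isSome → g (i+1) ≠ g i → c (i+1) = c i + 1 := by
    intro i hi hne
    rcases hstep i with e | e
    · exfalso; apply hne
      rw [hgh _ hi, hgh _ (hdown i hi), e]
    · exact e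
  apply aux_subseq_congr g h _ _ c
  · intro i hi; exact hgh i hi.1
  · rintro i ⟨hs, hi⟩
    refine ⟨by rw [← hgh i hs]; exact hs, ?_⟩
    cases i with
    | zero => left; exact hc0
    | succ i =>
      right
      have hne : g (i+1) ≠ g i := by simpa using hi
      have e := key i hs hne
      rw [← hgh _ hs, e, Nat.add_sub_cancel, ← hgh _ (hdown i hs)]
      exact hne
  · rintro i j ⟨hi, -⟩ ⟨hs, hj⟩ hij
    cases j with
    | zero => omega
    | succ j =>
      have hne : g (j+1) ≠ g j := by simpa using hj
      have e := key j hs hne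
      have := hmono (Nat.lt_succ_iff.1 hij)
      omega
  · rintro k ⟨hs, hk⟩
    have hex := hsurj k hs
    obtain ⟨hg, hck⟩ := Nat.find_spec hex
    have hmin := fun m hm => Nat.find_min hex (m := m) hm
    generalize Nat.find hex = i at hg hck hmin
    refine ⟨i, ⟨hg, ?_⟩, hck⟩
    cases i with
    | zero => left; rfl
    | succ i =>
      right
      have h1 : c i ≠ k := fun e => hmin i (Nat.lt_succ_self i) ⟨hdown i hg, e⟩
      have h2 : k = c i + 1 := by rcases hstep i with e | e <;> omega
      rw [Nat.add_sub_cancel, hgh _ hg, hgh _ (hdown i hg), hck]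
      rcases hk with hk | hk
      · omega
      · rw [h2, Nat.add_sub_cancel] at hk
        rw [h2]; exact hk

/-- The effect of a transition. -/
def auxDelta {P T : Type*} (N : PetriNet P T) (t : T) : P → ℤ :=
  fun p => (N.post t p : ℤ) - N.pre p t

theorem aux_period {P T : Type*} (N : PetriNet P T) (f : MvPolynomial P ℤ) (t : T)
    (ht : ∀ m m', N.Fires m t m' → MvPolynomial.eval (fun p => (m p : ℤ)) f =
      MvPolynomial.eval (fun p => (m' p : ℤ)) f) (x : P → ℤ) :
    MvPolynomial.eval (x + auxDelta N t) f = MvPolynomial.eval x f := by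
  have hev : ∀ y : P → ℤ, MvPolynomial.eval y (MvPolynomial.bind₁
      (fun p => MvPolynomial.X p + MvPolynomial.C (auxDelta N t p)) f) =
      MvPolynomial.eval (y + auxDelta N t) f := by
    intro y
    rw [MvPolynomial.eval, MvPolynomial.eval₂Hom_bind₁]
    congr 2
    funext p
    simp
  have : MvPolynomial.bind₁
      (fun p => MvPolynomial.X p + MvPolynomial.C (auxDelta N t p)) f = f := by
    apply MvPolynomial.funext_set (fun p => Set.Ici (N.pre p t : ℤ))
      (fun p => Set.Ici_infinite _)
    intro y hy
    rw [hev]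
    have hy' : ∀ p, (N.pre p t : ℤ) ≤ y p := fun p => hy p (Set.mem_univ p)
    have e := ht (fun p => (y p).toNat) (fun p => (y p).toNat - N.pre p t + N.post t p)
      (fun p => ⟨by have := hy' p; show _ ≤ (y p).toNat; omega, rfl⟩)
    have e1 : (fun p => (((y p).toNat : ℕ) : ℤ)) = y := by
      funext p; have := hy' p; omega
    have e2 : (fun p => (((y p).toNat - N.pre p t + N.post t p : ℕ) : ℤ)) = y + auxDelta N t := by
      funext p; have := hy' p
      simp only [Pi.add_apply, auxDelta]
      omega
    rw [e1, e2] at e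
    exact e.symm
  rw [← hev, this]

/-- The marking (over the integers) reached by the visible transitions. -/
def auxF {P T : Type*} (N : PetriNet P T) (m : P → ℕ) (w : ℕ → Option T) : ℕ → P → ℤ
  | 0 => fun p => (m p : ℤ)
  | k + 1 => match w k with
    | none => auxF N m w k
    | some t => auxF N m w k + auxDelta N t

/-- The reference label sequence. -/
noncomputable def auxH {P T : Type*} (N : PetriNet P T) (Q : Set (PolyProp P)) (m : P → ℕ)
    (w : ℕ → Option T) : ℕ → Option (Set (PolyProp P)) :=
  fun k => if k = 0 ∨ (w (k - 1)).isSome then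
    some {qp ∈ Q | qp.cmp.holds (MvPolynomial.eval (auxF N m w k) qp.poly) qp.const} else none

theorem aux_main {P T : Type*} (N : PetriNet P T) (Q : Set (PolyProp P)) (p : TPath N.Fires)
    (I : Set T) (hI : I = {t : T | ∀ qp ∈ Q, ∀ m m', N.Fires m t m' →
          PolyProp.value qp m = PolyProp.value qp m'}) :
    nsTrace (p.labelSeq (fun m => {qp ∈ Q | qp.sat m})) =
      nsTrace (auxH N Q (p.states 0)
        (subseq p.actSeq (fun i => (i : ℕ∞) < p.len ∧ p.acts i ∉ I))) := by
  set V : ℕ → Prop := fun i => (i : ℕ∞) < p.len ∧ p.acts i ∉ I with hV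
  set w := subseq p.actSeq V with hw
  have hwV : ∀ i, V i → w (Nat.count V i) = some (p.acts i) := by
    intro i hi
    rw [hw, aux_subseq_some _ _ _ hi, TPath.actSeq, if_pos hi.1]
  have hsome : ∀ i, (p.labelSeq (fun m => {qp ∈ Q | qp.sat m}) i).isSome ↔ (i : ℕ∞) ≤ p.len := by
    intro i
    unfold TPath.labelSeq
    split_ifs with h <;> simp [h]
  have hlt : ∀ i : ℕ, ((i + 1 : ℕ) : ℕ∞) ≤ p.len ↔ (i : ℕ∞) < p.len := by
    intro i
    rw [Nat.cast_add, Nat.cast_one]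
    exact ENat.add_one_le_iff (ENat.natCast_ne_top i)
  have hstate : ∀ i : ℕ, (i : ℕ∞) ≤ p.len →
      (Nat.count V i = 0 ∨ (w (Nat.count V i - 1)).isSome) ∧
      ∃ d : P → ℤ, (fun x => (p.states i x : ℤ)) = auxF N (p.states 0) w (Nat.count V i) + d ∧
        ∀ qp ∈ Q, ∀ x, MvPolynomial.eval (x + d) qp.poly = MvPolynomial.eval x qp.poly := by
    intro i
    induction i with
    | zero =>
      intro _
      refine ⟨Or.inl (Nat.count_zero _), 0, ?_, ?_⟩
      · rw [Nat.count_zero, add_zero]; rfl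
      · intro qp _ x; rw [add_zero]
    | succ i ih =>
      intro hi
      have hi' := (hlt i).1 hi
      obtain ⟨h1, d, hd, hper⟩ := ih hi'.le
      have hfire := p.valid i hi'
      have hs : (fun x => (p.states (i+1) x : ℤ)) =
          (fun x => (p.states i x : ℤ)) + auxDelta N (p.acts i) := by
        funext x
        obtain ⟨ha, hb⟩ := hfire x
        simp only [Pi.add_apply, auxDelta]
        omega
      by_cases hv : p.acts i ∈ I
      · have hnV : ¬ V i := fun h => h.2 hv
        rw [Nat.count_succ, if_neg hnV, add_zero]
        refine ⟨h1, d + auxDelta N (p.acts i), ?_, ?_⟩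
        · rw [hs, hd, add_assoc]
        · intro qp hqp x
          rw [hI] at hv
          rw [← add_assoc, aux_period N qp.poly _ (hv qp hqp), hper qp hqp]
      · have hVi : V i := ⟨hi', hv⟩
        rw [Nat.count_succ, if_pos hVi]
        refine ⟨Or.inr ?_, d, ?_, hper⟩
        · rw [Nat.add_sub_cancel, hwV i hVi]; rfl
        · rw [hs, hd, auxF, hwV i hVi]
          simp only
          abel
  apply aux_nsTrace _ _ (Nat.count V) (Nat.count_zero _)
  · intro i
    rw [Nat.count_succ]
    split_ifs <;> simp
  · intro i hi
    rw [hsome] at hi ⊢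
    exact ((hlt i).1 hi).le
  · intro i hi
    rw [hsome] at hi
    obtain ⟨h1, d, hd, hper⟩ := hstate i hi
    rw [auxH, if_pos h1, TPath.labelSeq, if_pos hi]
    congr 1
    ext qp
    simp only [Set.mem_ofPred_eq]
    refine and_congr_right (fun hqp => ?_)
    rw [PolyProp.sat, PolyProp.value, hd, hper qp hqp]
  · intro k hk
    cases k with
    | zero => exact ⟨0, by rw [hsome]; simp, Nat.count_zero _⟩
    | succ k =>
      have hk' : (w k).isSome := by
        by_contra hn
        have hneg : ¬ (k + 1 = 0 ∨ (w (k + 1 - 1)).isSome) := by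
          rintro (h | h)
          · omega
          · exact hn h
        rw [auxH, if_neg hneg] at hk
        simp at hk
      by_cases hex : ∃ i, V i ∧ Nat.count V i = k
      · obtain ⟨i, hi, rfl⟩ := hex
        refine ⟨i + 1, ?_, ?_⟩
        · rw [hsome, hlt]; exact hi.1
        · rw [Nat.count_succ, if_pos hi]
      · rw [hw, aux_subseq_none _ _ _ hex] at hk'
        simp at hk'

/-- Under value invisibility, the LSTS underlying a Petri net is labelled
consistently for polynomial propositions: paths starting in a common marking that are
weakly equivalent w.r.t. the set of value invisible structural transitions are stutter
equivalent under the labelling by polynomial propositions. -/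
theorem petri_value_invisibility_consistent_for_polynomial {P T : Type*}
    [Fintype P] [Fintype T] (N : PetriNet P T) (Q : Set (PolyProp P)) :
    ∀ p q : TPath N.Fires,
      p.states 0 = q.states 0 →
      WeakEquiv {t : T | ∀ qp ∈ Q, ∀ m m', N.Fires m t m' →
          PolyProp.value qp m = PolyProp.value qp m'} p q →
      StutterEquiv (fun m => {qp ∈ Q | qp.sat m}) (fun m => {qp ∈ Q | qp.sat m})
        p q := by

  intro p q h0 hw
  refine ⟨hw.1, ?_⟩
  rw [aux_main N Q p _ rfl, aux_main N Q q _ rfl, hw.2, h0]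
end

section
/- Under ordinary invisibility, the LSTS underlying a Petri net is not necessarily labelled consistently for arbitrary propositions: there exist a Petri net, a labelling L of its markings by a single atomic proposition, and two initial paths π and π' that are weakly equivalent with respect to the set of ordinarily invisible structural transitions but not stutter equivalent under L. -/
open scoped Classical

theorem subseq_singleton_aux {α : Type*} (g : ℕ → Option α) (P : ℕ → Prop) (a : ℕ)
    (h : ∀ i, P i ↔ i = a) : subseq g P = fun k => if k = 0 then g a else none := by
  have hs : {i | P i} = {a} := by ext i; simp [h]
  have h0 : Nat.nth P 0 = a := by
    have hc : Nat.count P a = 0 := by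
      rw [Nat.count_eq_card_filter_range, Finset.card_eq_zero, Finset.filter_eq_empty_iff]
      intro i hi hp
      have := (h i).1 hp
      have := Finset.mem_range.1 hi
      omega
    have := Nat.nth_count (p := P) ((h a).2 rfl)
    rwa [hc] at this
  funext k
  unfold subseq
  rw [hs]
  by_cases hk : k = 0
  · subst hk; simp [h0]
  · simp [hk]

/-- One place; `true` takes two tokens and returns one, `false` takes one token. -/
def exNet : PetriNet Unit Bool where
  pre := fun _ t => if t then 2 else 1
  post := fun t _ => if t then 1 else 0
  m0 := fun _ => 2

/-- The proposition holds iff the place is empty. -/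
def exL : (Unit → ℕ) → Set Unit := fun m => {_u | m () = 0}

/-- The path firing `false`. -/
def exP : TPath exNet.Fires where
  states := fun i _ => 2 - i
  acts := fun _ => false
  len := ((1 : ℕ) : ℕ∞)
  valid := by
    intro i hi
    have hi : i < 1 := by exact_mod_cast hi
    interval_cases i
    intro p
    simp [exNet]

/-- The path firing `true` and then `false`. -/
def exQ : TPath exNet.Fires where
  states := fun i _ => 2 - i
  acts := fun i => decide (i = 0)
  len := ((2 : ℕ) : ℕ∞)
  valid := by
    intro i hi
    have hi : i < 2 := by exact_mod_cast hi
    interval_cases i <;> intro p <;> simp [exNet]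

theorem exTrue : true ∈ {t : Bool | ∀ m m', exNet.Fires m t m' → exL m = exL m'} := by
  intro m m' h
  have h := h ()
  simp [exNet] at h
  ext u
  simp [exL]
  omega

theorem exFalse : false ∉ {t : Bool | ∀ m m', exNet.Fires m t m' → exL m = exL m'} := by
  intro h
  have h := h (fun _ => 1) (fun _ => 0) (by intro p; simp [exNet])
  have : () ∈ exL (fun _ => 1) := by rw [h]; simp [exL]
  simp [exL] at this

theorem exL_ne {m m' : Unit → ℕ} (h : m () ≠ 0) (h' : m' () ≠ 0) : exL m = exL m' := by
  ext u; simp [exL, h, h']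

theorem petri_ordinary_invisibility_not_consistent :
    ∃ (P T : Type) (_ : Fintype P) (_ : Fintype T) (N : PetriNet P T)
      (L : (P → ℕ) → Set Unit) (p q : TPath N.Fires),
      p.states 0 = N.m0 ∧ q.states 0 = N.m0 ∧
      WeakEquiv {t : T | ∀ m m', N.Fires m t m' → L m = L m'} p q ∧
      ¬ StutterEquiv L L p q := by
  refine ⟨Unit, Bool, inferInstance, inferInstance, exNet, exL, exP, exQ, rfl, rfl,
    ⟨?_, ?_⟩, ?_⟩
  · simp [exP, exQ]
  · have hT := exTrue
    have hF := exFalse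
    generalize {t : Bool | ∀ m m', exNet.Fires m t m' → exL m = exL m'} = I at hT hF
    rw [subseq_singleton_aux _ _ 0, subseq_singleton_aux _ _ 1]
    · simp [TPath.actSeq, exP, exQ]
    · intro i
      have e : ((i : ℕ∞) < exQ.len) ↔ i < 2 := by simp only [exQ]; exact Nat.cast_lt
      rw [e]
      constructor
      · rintro ⟨h1, h2⟩
        interval_cases i
        · exact absurd hT h2
        · rfl
      · rintro rfl
        exact ⟨by norm_num, hF⟩
    · intro i
      have e : ((i : ℕ∞) < exP.len) ↔ i < 1 := by simp only [exP]; exact Nat.cast_lt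
      rw [e]
      constructor
      · rintro ⟨h1, h2⟩
        omega
      · rintro rfl
        exact ⟨by norm_num, hF⟩
  · rintro ⟨-, h⟩
    have gP : ∀ i, exP.labelSeq exL i = if i ≤ 1 then some (exL fun _ => 2 - i) else none := by
      intro i
      have e : ((i : ℕ∞) ≤ exP.len) ↔ i ≤ 1 := by simp only [exP]; exact Nat.cast_le
      simp only [TPath.labelSeq, e]; rfl
    have gQ : ∀ i, exQ.labelSeq exL i = if i ≤ 2 then some (exL fun _ => 2 - i) else none := by
      intro i
      have e : ((i : ℕ∞) ≤ exQ.len) ↔ i ≤ 2 := by simp only [exQ]; exact Nat.cast_le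
      simp only [TPath.labelSeq, e]; rfl
    have e12 : exL (fun _ => 1) = exL (fun _ => 2) := exL_ne (by simp) (by simp)
    have e01 : exL (fun _ => 0) ≠ exL (fun _ => 1) := by
      intro h
      have : () ∈ exL (fun _ => 1) := by rw [← h]; simp [exL]
      simp [exL] at this
    have h1 := congrFun h 1
    unfold nsTrace at h1
    rw [subseq_singleton_aux _ _ 0] at h1
    · set P : ℕ → Prop := fun i => (exQ.labelSeq exL i).isSome = true ∧
        (i = 0 ∨ exQ.labelSeq exL i ≠ exQ.labelSeq exL (i - 1)) with hP
      have p0 : P 0 := by simp [hP, gQ]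
      have p1 : ¬ P 1 := by simp [hP, gQ, e12]
      have p2 : P 2 := by simp [hP, gQ, e01]
      have hs : {i | P i} = {0, 2} := by
        ext i
        constructor
        · intro hi
          have hi2 : i ≤ 2 := by
            by_contra hc
            have := hi.1
            simp [gQ, hc] at this
          interval_cases i
          · simp
          · exact absurd hi p1
          · simp
        · rintro (rfl | rfl)
          · exact p0
          · exact p2
      have hc : Nat.count P 2 = 1 := by
        simp [Nat.count_succ, p0, p1]
      have hn : Nat.nth P 1 = 2 := by
        have := Nat.nth_count (p := P) p2
        rwa [hc] at this
      have hcard : ({0, 2} : Set ℕ).ncard = 2 := Set.ncard_pair (by norm_num)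
      unfold subseq at h1
      rw [hs, hcard, hn] at h1
      simp [gQ] at h1
    · intro i
      constructor
      · rintro ⟨h1, h2⟩
        have hi2 : i ≤ 1 := by
          by_contra hc
          simp [gP, hc] at h1
        interval_cases i
        · rfl
        · simp [gP, e12] at h2
      · rintro rfl
        simp [gP]
end
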